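/- Let d ≥ 2 and n ≥ 1 be integers, let u₀ ∈ ℝⁿ, and let b, r₀ > 0. Suppose f = f(r,u) is defined and continuous in r and continuously differentiable in u on the set {(r,u) ∈ [0,r₀) × ℝⁿ : |u − u₀| < b}. Then there exists r₁ > 0 such that the singular Cauchy problem (r^{d−1} u′)′ + r^{d−1} f(r,u) = 0 with u(0) = u₀ and u′(0) = 0 has exactly one solution u of class C² on [0, r₁). -/

import Mathlib

open Set Metric

/-- `u` is a `C²` solution on `[0, r₁)` of the singular Cauchy problem
`(r^{d-1} u')' + r^{d-1} f(r,u) = 0`, `u(0) = u₀`, `u'(0) = 0`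
(equivalently `u'' + ((d-1)/r) u' + f(r,u) = 0` for `0 < r < r₁`),
with values staying in the ball where `f` is defined.  One-sided derivatives
at `0` are taken within `[0,∞)`. -/
def IsC2Sol (d n : ℕ) (f : ℝ → EuclideanSpace ℝ (Fin n) → EuclideanSpace ℝ (Fin n))
    (u₀ : EuclideanSpace ℝ (Fin n)) (b r₁ : ℝ) (u : ℝ → EuclideanSpace ℝ (Fin n)) : Prop :=
  (∀ r ∈ Ico (0:ℝ) r₁, DifferentiableWithinAt ℝ u (Ici 0) r) ∧
  (∀ r ∈ Ico (0:ℝ) r₁, DifferentiableWithinAt ℝ (derivWithin u (Ici 0)) (Ici 0) r) ∧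
  ContinuousOn (derivWithin (derivWithin u (Ici 0)) (Ici 0)) (Ico 0 r₁) ∧
  u 0 = u₀ ∧ derivWithin u (Ici 0) 0 = 0 ∧
  (∀ r ∈ Ico (0:ℝ) r₁, u r ∈ ball u₀ b) ∧
  (∀ r ∈ Ioo (0:ℝ) r₁,
    derivWithin (derivWithin u (Ici 0)) (Ici 0) r
      + (((d:ℝ) - 1) / r) • derivWithin u (Ici 0) r + f r (u r) = 0)

/-!
Multiplying by `r^m`, `m = d - 1`, removes the singularity: a solution satisfies
`r^m u'(r) = -∫₀ʳ t^m f(t, u(t)) dt`. Rescaling `t = rτ` turns this into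
`u'(r) = -r ∫₀¹ τ^m f(rτ, u(rτ)) dτ`, which is regular at `r = 0` and gains a factor `r`; hence the
Picard operator of the integrated equation is a contraction on `[0, R]` for small `R`.
For uniqueness, `t^m ≤ r^m` on `[0, r]` gives `‖(u - w)'(r)‖ ≤ L ∫₀ʳ ‖u - w‖`, and Grönwall's
inequality applies.
-/

open scoped NNReal Topology

section RadialAverage

variable {E : Type*} [NormedAddCommGroup E] [NormedSpace ℝ E] {m : ℕ} {g g₁ g₂ : ℝ → E}

/-- The weighted average `∫₀¹ τ^m g(sτ) dτ`, which for `s ≠ 0` is `s^{-(m+1)} ∫₀ˢ t^m g(t) dt`.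
The rescaled form makes sense, and is continuous, at `s = 0`. -/
noncomputable def radialAverage (m : ℕ) (g : ℝ → E) (s : ℝ) : E :=
  ∫ τ in (0 : ℝ)..1, τ ^ m • g (s * τ)

lemma pow_succ_smul_radialAverage (s : ℝ) :
    s ^ (m + 1) • radialAverage m g s = ∫ t in (0 : ℝ)..s, t ^ m • g t := by
  have h := intervalIntegral.smul_integral_comp_mul_left (a := 0) (b := 1)
    (fun t => t ^ m • g t) s
  simp only [mul_zero, mul_one] at h
  rw [← h, radialAverage, pow_succ', mul_smul, ← intervalIntegral.integral_smul]
  simp only [mul_pow, mul_smul]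

lemma radialAverage_sub (h₁ : Continuous g₁) (h₂ : Continuous g₂) (s : ℝ) :
    radialAverage m (g₁ - g₂) s = radialAverage m g₁ s - radialAverage m g₂ s := by
  unfold radialAverage
  rw [← intervalIntegral.integral_sub]
  · simp only [Pi.sub_apply, smul_sub]
  all_goals exact Continuous.intervalIntegrable (by fun_prop) _ _

lemma norm_radialAverage_le {M s : ℝ} (hs : 0 ≤ s) (hM : ∀ t ∈ Icc 0 s, ‖g t‖ ≤ M) :
    ‖radialAverage m g s‖ ≤ M := by
  have hbound : ∀ τ ∈ uIoc (0 : ℝ) 1, ‖τ ^ m • g (s * τ)‖ ≤ M := by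
    intro τ hτ
    rw [uIoc_of_le zero_le_one] at hτ
    have hτs : s * τ ∈ Icc 0 s := ⟨mul_nonneg hs hτ.1.le, mul_le_of_le_one_right hs hτ.2⟩
    calc ‖τ ^ m • g (s * τ)‖ = τ ^ m * ‖g (s * τ)‖ := by
          rw [norm_smul, norm_pow, Real.norm_of_nonneg hτ.1.le]
      _ ≤ ‖g (s * τ)‖ :=
          mul_le_of_le_one_left (norm_nonneg _) (pow_le_one₀ hτ.1.le hτ.2)
      _ ≤ M := hM _ hτs
  simpa only [radialAverage, sub_zero, abs_one, mul_one] using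
    intervalIntegral.norm_integral_le_of_norm_le_const hbound

lemma continuous_radialAverage (hg : Continuous g) : Continuous (radialAverage m g) :=
  intervalIntegral.continuous_parametric_intervalIntegral_of_continuous' (by fun_prop) _ _

lemma hasDerivAt_smul_radialAverage_zero (hg : Continuous g) :
    HasDerivAt (fun s => s • radialAverage m g s) (radialAverage m g 0) 0 := by
  rw [hasDerivAt_iff_tendsto_slope]
  refine ((continuous_radialAverage hg).tendsto 0 |>.mono_left nhdsWithin_le_nhds).congr' ?_
  filter_upwards [self_mem_nhdsWithin] with s hs
  have hs : s ≠ 0 := hs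
  simp [slope_def_module, smul_smul, hs]

variable [CompleteSpace E]

lemma radialAverage_zero : radialAverage m g 0 = ((m : ℝ) + 1)⁻¹ • g 0 := by
  simp [radialAverage, intervalIntegral.integral_smul_const]

lemma hasDerivAt_smul_radialAverage_of_ne_zero (hg : Continuous g) {s : ℝ} (hs : s ≠ 0) :
    HasDerivAt (fun s => s • radialAverage m g s) (g s - (m : ℝ) • radialAverage m g s) s := by
  have hint : HasDerivAt (fun s => ∫ t in (0 : ℝ)..s, t ^ m • g t) (s ^ m • g s) s :=
    (show Continuous fun t => t ^ m • g t by fun_prop).integral_hasStrictDerivAt 0 s |>.hasDerivAt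
  have hinv : HasDerivAt (fun s : ℝ => (s ^ m)⁻¹) (-(m / s ^ (m + 1))) s := by
    refine ((hasDerivAt_pow m s).fun_inv (pow_ne_zero m hs)).congr_deriv ?_
    rcases m with _ | k
    · simp
    · simp only [Nat.add_sub_cancel]
      field_simp
      ring
  have heq : (fun s => s • radialAverage m g s) =ᶠ[𝓝 s]
      fun s => (s ^ m)⁻¹ • ∫ t in (0 : ℝ)..s, t ^ m • g t := by
    filter_upwards [isOpen_ne.mem_nhds hs] with x hx
    have hx : x ≠ 0 := hx
    rw [← pow_succ_smul_radialAverage, pow_succ, mul_smul, inv_smul_smul₀ (pow_ne_zero m hx)]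
  refine ((hinv.smul hint).congr_of_eventuallyEq heq).congr_deriv ?_
  rw [← pow_succ_smul_radialAverage, inv_smul_smul₀ (pow_ne_zero m hs), smul_smul, neg_mul,
    div_mul_cancel₀ _ (pow_ne_zero _ hs)]
  module

lemma hasDerivAt_smul_radialAverage (hg : Continuous g) (s : ℝ) :
    HasDerivAt (fun s => s • radialAverage m g s) (g s - (m : ℝ) • radialAverage m g s) s := by
  rcases eq_or_ne s 0 with rfl | hs
  · have hm : (m : ℝ) + 1 ≠ 0 := by positivity
    have hg0 : g 0 = ((m : ℝ) + 1) • radialAverage m g 0 := by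
      rw [radialAverage_zero, smul_inv_smul₀ hm]
    convert hasDerivAt_smul_radialAverage_zero hg using 1
    rw [hg0]
    module
  · exact hasDerivAt_smul_radialAverage_of_ne_zero hg hs

end RadialAverage

section RadialPotential

variable {E : Type*} [NormedAddCommGroup E] [NormedSpace ℝ E] {m : ℕ} {g g₁ g₂ : ℝ → E}

/-- The radial potential of `g`: the solution of `U'' + (m/r) U' = g` with `U(0) = 0` and
`U'(0) = 0`. Its derivative `r^{-m} ∫₀ʳ t^m g(t) dt` is written as `r • radialAverage m g r`. -/
noncomputable def radialPotential (m : ℕ) (g : ℝ → E) (r : ℝ) : E :=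
  ∫ s in (0 : ℝ)..r, s • radialAverage m g s

lemma radialPotential_zero : radialPotential m g 0 = 0 :=
  intervalIntegral.integral_same

lemma radialPotential_sub (h₁ : Continuous g₁) (h₂ : Continuous g₂) (r : ℝ) :
    radialPotential m (g₁ - g₂) r = radialPotential m g₁ r - radialPotential m g₂ r := by
  have c₁ := continuous_radialAverage (m := m) h₁
  have c₂ := continuous_radialAverage (m := m) h₂
  unfold radialPotential
  rw [← intervalIntegral.integral_sub]
  · simp only [radialAverage_sub h₁ h₂, smul_sub]
  all_goals exact Continuous.intervalIntegrable (by fun_prop) _ _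

lemma norm_radialPotential_le {M r : ℝ} (hr : 0 ≤ r) (hM : ∀ t ∈ Icc 0 r, ‖g t‖ ≤ M) :
    ‖radialPotential m g r‖ ≤ M * r ^ 2 := by
  have hbound : ∀ s ∈ uIoc 0 r, ‖s • radialAverage m g s‖ ≤ r * M := by
    intro s hs
    rw [uIoc_of_le hr] at hs
    rw [norm_smul, Real.norm_of_nonneg hs.1.le]
    exact mul_le_mul hs.2
      (norm_radialAverage_le hs.1.le fun t ht => hM t (Icc_subset_Icc_right hs.2 ht))
      (norm_nonneg _) hr
  calc ‖radialPotential m g r‖ ≤ r * M * |r - 0| :=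
        intervalIntegral.norm_integral_le_of_norm_le_const hbound
    _ = M * r ^ 2 := by
        rw [sub_zero, abs_of_nonneg hr]
        ring

variable [CompleteSpace E]

lemma hasDerivAt_radialPotential (hg : Continuous g) (r : ℝ) :
    HasDerivAt (radialPotential m g) (r • radialAverage m g r) r :=
  (continuous_id.smul (continuous_radialAverage hg)).integral_hasStrictDerivAt 0 r |>.hasDerivAt

lemma continuous_radialPotential (hg : Continuous g) : Continuous (radialPotential m g) :=
  continuous_iff_continuousAt.2 fun r => (hasDerivAt_radialPotential hg r).continuousAt

end RadialPotential

section RadialSolution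

variable {E : Type*} [NormedAddCommGroup E] [NormedSpace ℝ E]
  {m : ℕ} {f : ℝ → E → E} {u₀ : E} {b r₁ : ℝ} {u w : ℝ → E}

/-- `C²` solutions on `[0, r₁)`, with values in `ball u₀ b`, of `u'' + (m/r) u' + f(r,u) = 0`,
`u(0) = u₀`, `u'(0) = 0`: the notion `IsC2Sol` in a normed space, with `m` in place of `d - 1`. -/
structure IsRadialSolution (m : ℕ) (f : ℝ → E → E) (u₀ : E) (b r₁ : ℝ) (u : ℝ → E) : Prop where
  differentiableWithinAt : ∀ r ∈ Ico 0 r₁, DifferentiableWithinAt ℝ u (Ici 0) r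
  differentiableWithinAt_derivWithin :
    ∀ r ∈ Ico 0 r₁, DifferentiableWithinAt ℝ (derivWithin u (Ici 0)) (Ici 0) r
  continuousOn_derivWithin_derivWithin :
    ContinuousOn (derivWithin (derivWithin u (Ici 0)) (Ici 0)) (Ico 0 r₁)
  map_zero : u 0 = u₀
  derivWithin_zero : derivWithin u (Ici 0) 0 = 0
  mem_ball : ∀ r ∈ Ico 0 r₁, u r ∈ ball u₀ b
  equation : ∀ r ∈ Ioo 0 r₁, derivWithin (derivWithin u (Ici 0)) (Ici 0) r
    + ((m : ℝ) / r) • derivWithin u (Ici 0) r + f r (u r) = 0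

lemma isC2Sol_succ_iff {n : ℕ} {f : ℝ → EuclideanSpace ℝ (Fin n) → EuclideanSpace ℝ (Fin n)}
    {u₀ : EuclideanSpace ℝ (Fin n)} {u : ℝ → EuclideanSpace ℝ (Fin n)} :
    IsC2Sol (m + 1) n f u₀ b r₁ u ↔ IsRadialSolution m f u₀ b r₁ u := by
  simp only [IsC2Sol, Nat.cast_succ, add_sub_cancel_right]
  exact ⟨fun ⟨hu, hu', hu'', h₀, h₀', hball, heq⟩ => ⟨hu, hu', hu'', h₀, h₀', hball, heq⟩,
    fun ⟨hu, hu', hu'', h₀, h₀', hball, heq⟩ => ⟨hu, hu', hu'', h₀, h₀', hball, heq⟩⟩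

lemma isRadialSolution_of_hasDerivWithinAt {u' u'' : ℝ → E}
    (hu : ∀ r ∈ Ici 0, HasDerivWithinAt u (u' r) (Ici 0) r)
    (hu' : ∀ r ∈ Ici 0, HasDerivWithinAt u' (u'' r) (Ici 0) r)
    (hu'' : ContinuousOn u'' (Ico 0 r₁)) (h₀ : u 0 = u₀) (h₀' : u' 0 = 0)
    (hball : ∀ r ∈ Ico 0 r₁, u r ∈ ball u₀ b)
    (heq : ∀ r ∈ Ioo 0 r₁, u'' r + ((m : ℝ) / r) • u' r + f r (u r) = 0) :
    IsRadialSolution m f u₀ b r₁ u := by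
  have e₁ : EqOn (derivWithin u (Ici 0)) u' (Ici 0) := fun r hr =>
    (hu r hr).derivWithin (uniqueDiffOn_Ici 0 r hr)
  have hd : ∀ r ∈ Ici 0, HasDerivWithinAt (derivWithin u (Ici 0)) (u'' r) (Ici 0) r :=
    fun r hr => (hu' r hr).congr e₁ (e₁ hr)
  have e₂ : EqOn (derivWithin (derivWithin u (Ici 0)) (Ici 0)) u'' (Ici 0) := fun r hr =>
    (hd r hr).derivWithin (uniqueDiffOn_Ici 0 r hr)
  refine ⟨fun r hr => (hu r hr.1).differentiableWithinAt,
    fun r hr => (hd r hr.1).differentiableWithinAt, hu''.congr (e₂.mono Ico_subset_Ici_self),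
    h₀, (e₁ self_mem_Ici).trans h₀', hball, fun r hr => ?_⟩
  rw [e₂ hr.1.le, e₁ hr.1.le, heq r hr]

lemma isRadialSolution_sub_radialPotential [CompleteSpace E] {g : ℝ → E} (hg : Continuous g)
    (hball : ∀ r ∈ Ico 0 r₁, u₀ - radialPotential m g r ∈ ball u₀ b)
    (hgf : ∀ r ∈ Ico 0 r₁, g r = f r (u₀ - radialPotential m g r)) :
    IsRadialSolution m f u₀ b r₁ (fun r => u₀ - radialPotential m g r) := by
  have hc := continuous_radialAverage (m := m) hg
  refine isRadialSolution_of_hasDerivWithinAt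
    (fun r _ => ((hasDerivAt_radialPotential hg r).const_sub u₀).hasDerivWithinAt)
    (fun r _ => (hasDerivAt_smul_radialAverage hg r).fun_neg.hasDerivWithinAt)
    (by fun_prop) (by rw [radialPotential_zero, sub_zero]) (by rw [zero_smul, neg_zero]) hball
    fun r hr => ?_
  rw [← hgf r (Ioo_subset_Ico_self hr), smul_neg, smul_smul, div_mul_cancel₀ _ hr.1.ne']
  module

namespace IsRadialSolution

lemma continuousOn (hu : IsRadialSolution m f u₀ b r₁ u) : ContinuousOn u (Ico 0 r₁) :=
  fun r hr => (hu.differentiableWithinAt r hr).continuousWithinAt.mono Ico_subset_Ici_self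

lemma continuousOn_comp (hf : ContinuousOn (fun p : ℝ × E => f p.1 p.2) (Ico 0 r₁ ×ˢ ball u₀ b))
    (hu : IsRadialSolution m f u₀ b r₁ u) : ContinuousOn (fun r => f r (u r)) (Ico 0 r₁) :=
  hf.comp (continuousOn_id.prodMk hu.continuousOn) fun r hr => ⟨hr, hu.mem_ball r hr⟩

lemma continuousOn_derivWithin (hu : IsRadialSolution m f u₀ b r₁ u) :
    ContinuousOn (derivWithin u (Ici 0)) (Ico 0 r₁) :=
  fun r hr =>
    (hu.differentiableWithinAt_derivWithin r hr).continuousWithinAt.mono Ico_subset_Ici_self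

lemma hasDerivAt_pow_smul_derivWithin (hu : IsRadialSolution m f u₀ b r₁ u) {r : ℝ}
    (hr : r ∈ Ioo 0 r₁) :
    HasDerivAt (fun t => t ^ m • derivWithin u (Ici 0) t) (-(r ^ m • f r (u r))) r := by
  have hu'' := ((hu.differentiableWithinAt_derivWithin r
    (Ioo_subset_Ico_self hr)).hasDerivWithinAt).hasDerivAt (Ici_mem_nhds hr.1)
  refine ((hasDerivAt_pow m r).fun_smul hu'').congr_deriv ?_
  have hm : (m : ℝ) * r ^ (m - 1) = r ^ m * (m / r) := by
    have := hr.1.ne'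
    rcases m with _ | k
    · simp
    · rw [Nat.add_sub_cancel]
      field_simp
      ring
  rw [← smul_neg, ← eq_neg_of_add_eq_zero_left (hu.equation r hr), hm]
  module

variable [CompleteSpace E]

lemma pow_smul_derivWithin (hf : ContinuousOn (fun p : ℝ × E => f p.1 p.2) (Ico 0 r₁ ×ˢ ball u₀ b))
    (hu : IsRadialSolution m f u₀ b r₁ u) {r : ℝ} (hr : r ∈ Ico 0 r₁) :
    r ^ m • derivWithin u (Ici 0) r = -∫ t in (0 : ℝ)..r, t ^ m • f t (u t) := by
  have hsub : Icc 0 r ⊆ Ico 0 r₁ := Icc_subset_Ico_right hr.2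
  have hu' := hu.continuousOn_derivWithin.mono hsub
  have hfu := (hu.continuousOn_comp hf).mono hsub
  have hFTC := intervalIntegral.integral_eq_sub_of_hasDerivAt_of_le hr.1
    ((continuous_pow m).continuousOn.fun_smul hu')
    (fun t ht => hu.hasDerivAt_pow_smul_derivWithin (Ioo_subset_Ioo_right hr.2.le ht))
    (((continuous_pow m).continuousOn.smul hfu).neg.intervalIntegrable_of_Icc hr.1)
  rw [hu.derivWithin_zero, smul_zero, sub_zero, intervalIntegral.integral_neg] at hFTC
  exact hFTC.symm

lemma norm_derivWithin_sub_le
    (hf : ContinuousOn (fun p : ℝ × E => f p.1 p.2) (Ico 0 r₁ ×ˢ ball u₀ b))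
    (hu : IsRadialSolution m f u₀ b r₁ u) (hw : IsRadialSolution m f u₀ b r₁ w) {r : ℝ}
    (hr : r ∈ Ico 0 r₁) :
    ‖derivWithin u (Ici 0) r - derivWithin w (Ici 0) r‖
      ≤ ∫ t in (0 : ℝ)..r, ‖f t (u t) - f t (w t)‖ := by
  rcases hr.1.eq_or_lt with rfl | hr₀
  · simp [hu.derivWithin_zero, hw.derivWithin_zero]
  have hsub : Icc 0 r ⊆ Ico 0 r₁ := Icc_subset_Ico_right hr.2
  have hfu := (hu.continuousOn_comp hf).mono hsub
  have hfw := (hw.continuousOn_comp hf).mono hsub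
  have hdiff : r ^ m • (derivWithin u (Ici 0) r - derivWithin w (Ici 0) r)
      = ∫ t in (0 : ℝ)..r, t ^ m • (f t (w t) - f t (u t)) := by
    simp only [smul_sub]
    rw [hu.pow_smul_derivWithin hf hr, hw.pow_smul_derivWithin hf hr,
      intervalIntegral.integral_sub, neg_sub_neg]
    · exact ((continuous_pow m).continuousOn.smul hfw).intervalIntegrable_of_Icc hr.1
    · exact ((continuous_pow m).continuousOn.smul hfu).intervalIntegrable_of_Icc hr.1
  refine le_of_mul_le_mul_left ?_ (pow_pos hr₀ m)
  calc r ^ m * ‖derivWithin u (Ici 0) r - derivWithin w (Ici 0) r‖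
      = ‖∫ t in (0 : ℝ)..r, t ^ m • (f t (w t) - f t (u t))‖ := by
        rw [← hdiff, norm_smul, norm_pow, Real.norm_of_nonneg hr.1]
    _ ≤ ∫ t in (0 : ℝ)..r, r ^ m * ‖f t (u t) - f t (w t)‖ := by
        refine intervalIntegral.norm_integral_le_of_norm_le hr.1 (.of_forall fun t ht => ?_)
          ((hfu.sub hfw).norm.intervalIntegrable_of_Icc hr.1 |>.const_mul _)
        rw [norm_smul, norm_pow, Real.norm_of_nonneg ht.1.le, norm_sub_rev]
        gcongr
        exacts [ht.1.le, ht.2]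
    _ = r ^ m * ∫ t in (0 : ℝ)..r, ‖f t (u t) - f t (w t)‖ :=
        intervalIntegral.integral_const_mul _ _

lemma norm_derivWithin_sub_le_mul_integral
    (hf : ContinuousOn (fun p : ℝ × E => f p.1 p.2) (Ico 0 r₁ ×ˢ ball u₀ b))
    (hu : IsRadialSolution m f u₀ b r₁ u) (hw : IsRadialSolution m f u₀ b r₁ w) {L r : ℝ}
    (hr : r ∈ Ico 0 r₁) (hL : ∀ t ∈ Icc 0 r, ‖f t (u t) - f t (w t)‖ ≤ L * ‖u t - w t‖) :
    ‖derivWithin u (Ici 0) r - derivWithin w (Ici 0) r‖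
      ≤ L * ∫ t in (0 : ℝ)..r, ‖u t - w t‖ := by
  have hsub : Icc 0 r ⊆ Ico 0 r₁ := Icc_subset_Ico_right hr.2
  have hfuw := ((hu.continuousOn_comp hf).sub (hw.continuousOn_comp hf)).mono hsub
  have huw := (hu.continuousOn.sub hw.continuousOn).mono hsub
  calc ‖derivWithin u (Ici 0) r - derivWithin w (Ici 0) r‖
      ≤ ∫ t in (0 : ℝ)..r, ‖f t (u t) - f t (w t)‖ := hu.norm_derivWithin_sub_le hf hw hr
    _ ≤ ∫ t in (0 : ℝ)..r, L * ‖u t - w t‖ :=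
        intervalIntegral.integral_mono_on hr.1 (hfuw.norm.intervalIntegrable_of_Icc hr.1)
          (huw.norm.intervalIntegrable_of_Icc hr.1 |>.const_mul L) hL
    _ = L * ∫ t in (0 : ℝ)..r, ‖u t - w t‖ := intervalIntegral.integral_const_mul _ _

end IsRadialSolution

end RadialSolution

section Uniqueness

variable {E : Type*} [NormedAddCommGroup E] [NormedSpace ℝ E]

lemma hasDerivWithinAt_integral_of_continuousOn_Icc [CompleteSpace E] {g : ℝ → E} {a b s : ℝ}
    (hg : ContinuousOn g (Icc a b)) (hs : s ∈ Ico a b) :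
    HasDerivWithinAt (fun r => ∫ t in a..r, g t) (g s) (Ici s) s := by
  have hs' : Icc a b ∈ 𝓝[>] s := Icc_mem_nhdsGT_of_mem hs
  exact intervalIntegral.integral_hasDerivWithinAt_right
    ((hg.mono (Icc_subset_Icc_right hs.2.le)).intervalIntegrable_of_Icc hs.1)
    ⟨Icc a b, hs', hg.aestronglyMeasurable measurableSet_Icc⟩
    ((hg s (Ico_subset_Icc_self hs)).mono_of_mem_nhdsWithin hs')

lemma eq_zero_of_norm_deriv_le_mul_integral_norm {v v' : ℝ → E} {L a : ℝ}
    (hv : ContinuousOn v (Icc 0 a)) (hv' : ∀ r ∈ Ico 0 a, HasDerivWithinAt v (v' r) (Ici r) r)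
    (hv₀ : v 0 = 0) (bound : ∀ r ∈ Ico 0 a, ‖v' r‖ ≤ L * ∫ t in (0 : ℝ)..r, ‖v t‖) :
    ∀ r ∈ Icc 0 a, v r = 0 := by
  intro r hr
  have ha : 0 ≤ a := hr.1.trans hr.2
  -- Grönwall's inequality for the pair `(v, ∫ ‖v‖)` absorbs the integral in the bound.
  let V : ℝ → E × ℝ := fun r => (v r, ∫ t in (0 : ℝ)..r, ‖v t‖)
  have hV : ContinuousOn V (Icc 0 a) := by
    refine hv.prodMk ?_
    rw [← uIcc_of_le ha]
    exact intervalIntegral.continuousOn_primitive_interval'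
      (hv.norm.intervalIntegrable_of_Icc ha) left_mem_uIcc
  have hV' : ∀ s ∈ Ico 0 a, HasDerivWithinAt V (v' s, ‖v s‖) (Ici s) s := fun s hs =>
    (hv' s hs).prodMk (hasDerivWithinAt_integral_of_continuousOn_Icc hv.norm hs)
  have hbound : ∀ s ∈ Ico 0 a, ‖(v' s, ‖v s‖)‖ ≤ max |L| 1 * ‖V s‖ := by
    intro s hs
    have h₁ : ‖v s‖ ≤ ‖V s‖ := norm_fst_le (V s)
    have h₂ : |∫ t in (0 : ℝ)..s, ‖v t‖| ≤ ‖V s‖ := norm_snd_le (V s)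
    refine max_le ?_ ?_
    · calc ‖v' s‖ ≤ |L * ∫ t in (0 : ℝ)..s, ‖v t‖| := (bound s hs).trans (le_abs_self _)
        _ ≤ max |L| 1 * ‖V s‖ := by
          rw [abs_mul]
          gcongr
          exact le_max_left _ _
    · calc ‖‖v s‖‖ ≤ 1 * ‖V s‖ := by rwa [norm_norm, one_mul]
        _ ≤ max |L| 1 * ‖V s‖ := by
          gcongr
          exact le_max_right _ _
  exact congrArg Prod.fst
    (eq_zero_of_abs_deriv_le_mul_abs_self_of_eq_zero_right hV hV' (by simp [V, hv₀]) hbound r hr)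

lemma exists_lt_subset_closedBall_of_isCompact {X : Type*} [PseudoMetricSpace X] {s : Set X}
    (hs : IsCompact s) {x : X} {b : ℝ} (h : s ⊆ ball x b) : ∃ c < b, s ⊆ closedBall x c := by
  rcases s.eq_empty_or_nonempty with rfl | hne
  · exact ⟨b - 1, sub_one_lt b, empty_subset _⟩
  · obtain ⟨y, hy, hmax⟩ := hs.exists_isMaxOn hne (continuous_id.dist continuous_const).continuousOn
    exact ⟨dist y x, h hy, fun z hz => hmax hz⟩

lemma IsRadialSolution.eqOn [CompleteSpace E] {m : ℕ} {f : ℝ → E → E} {u₀ : E} {b r₁ : ℝ}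
    {u w : ℝ → E} (hf : ContinuousOn (fun p : ℝ × E => f p.1 p.2) (Ico 0 r₁ ×ˢ ball u₀ b))
    (hlip : ∀ ρ < r₁, ∀ c < b, ∃ L : ℝ≥0, ∀ r ∈ Icc 0 ρ,
      LipschitzOnWith L (f r) (closedBall u₀ c))
    (hu : IsRadialSolution m f u₀ b r₁ u) (hw : IsRadialSolution m f u₀ b r₁ w) :
    EqOn u w (Ico 0 r₁) := by
  intro ρ hρ
  have hsub : Icc 0 ρ ⊆ Ico 0 r₁ := Icc_subset_Ico_right hρ.2
  have hcu := hu.continuousOn.mono hsub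
  have hcw := hw.continuousOn.mono hsub
  obtain ⟨c, hcb, hc⟩ := exists_lt_subset_closedBall_of_isCompact
    ((isCompact_Icc.image_of_continuousOn hcu).union (isCompact_Icc.image_of_continuousOn hcw))
    (union_subset (image_subset_iff.2 fun r hr => hu.mem_ball r (hsub hr))
      (image_subset_iff.2 fun r hr => hw.mem_ball r (hsub hr)))
  obtain ⟨L, hL⟩ := hlip ρ hρ.2 c hcb
  have hLip : ∀ t ∈ Icc 0 ρ, ‖f t (u t) - f t (w t)‖ ≤ L * ‖u t - w t‖ := fun t ht =>
    (hL t ht).norm_sub_le (hc (.inl (mem_image_of_mem u ht))) (hc (.inr (mem_image_of_mem w ht)))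
  have hderiv : ∀ r ∈ Ico 0 ρ, HasDerivWithinAt (u - w)
      (derivWithin u (Ici 0) r - derivWithin w (Ici 0) r) (Ici r) r := fun r hr =>
    have hr' := hsub (Ico_subset_Icc_self hr)
    ((hu.differentiableWithinAt r hr').hasDerivWithinAt.sub
      (hw.differentiableWithinAt r hr').hasDerivWithinAt).mono (Ici_subset_Ici.2 hr.1)
  have hbound : ∀ r ∈ Ico 0 ρ, ‖derivWithin u (Ici 0) r - derivWithin w (Ici 0) r‖
      ≤ L * ∫ t in (0 : ℝ)..r, ‖(u - w) t‖ := by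
    intro r hr
    exact hu.norm_derivWithin_sub_le_mul_integral hf hw (hsub (Ico_subset_Icc_self hr))
      fun t ht => hLip t (Icc_subset_Icc_right hr.2.le ht)
  exact sub_eq_zero.1 <| eq_zero_of_norm_deriv_le_mul_integral_norm (hcu.sub hcw) hderiv
    (by simp [hu.map_zero, hw.map_zero]) hbound ρ ⟨hρ.1, le_rfl⟩

end Uniqueness

section Existence

variable {E : Type*} [NormedAddCommGroup E] {f : ℝ → E → E} {u₀ : E} {R c M L : ℝ≥0}

/-- The hypotheses under which the Picard operator `u ↦ u₀ - radialPotential m (f(·, u))` is a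
contraction of the curves `[0, R] → closedBall u₀ c`; the analogue for the singular problem of
`IsPicardLindelof`. -/
structure IsRadialPicard (f : ℝ → E → E) (u₀ : E) (R c M L : ℝ≥0) : Prop where
  continuousOn : ContinuousOn (fun p : ℝ × E => f p.1 p.2) (Icc (0 : ℝ) R ×ˢ closedBall u₀ c)
  norm_le : ∀ r ∈ Icc (0 : ℝ) R, ∀ x ∈ closedBall u₀ c, ‖f r x‖ ≤ M
  lipschitzOnWith : ∀ r ∈ Icc (0 : ℝ) R, LipschitzOnWith L (f r) (closedBall u₀ c)
  mul_sq_le : M * R ^ 2 ≤ c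
  mul_sq_lt_one : L * R ^ 2 < 1

lemma exists_norm_le_of_lipschitzOnWith {X : Type*} [TopologicalSpace X] {K : Set X}
    (hK : IsCompact K) {f : X → E → E} (hf : ContinuousOn (f · u₀) K)
    (hlip : ∀ r ∈ K, LipschitzOnWith L (f r) (closedBall u₀ c)) :
    ∃ M : ℝ≥0, ∀ r ∈ K, ∀ x ∈ closedBall u₀ c, ‖f r x‖ ≤ M := by
  obtain ⟨A, hA⟩ := hK.exists_bound_of_continuousOn hf
  refine ⟨A.toNNReal + L * c, fun r hr x hx => ?_⟩
  have hu₀ : u₀ ∈ closedBall u₀ (c : ℝ) := mem_closedBall_self c.coe_nonneg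
  calc ‖f r x‖ ≤ ‖f r u₀‖ + ‖f r x - f r u₀‖ := norm_le_norm_add_norm_sub' _ _
    _ ≤ A.toNNReal + L * ‖x - u₀‖ :=
        add_le_add ((hA r hr).trans A.le_coe_toNNReal) ((hlip r hr).norm_sub_le hx hu₀)
    _ ≤ A.toNNReal + L * c := by
        gcongr
        rwa [← dist_eq_norm]
    _ = (A.toNNReal + L * c : ℝ≥0) := by push_cast; rfl

lemma exists_isRadialPicard {b r₀ : ℝ} (hb : 0 < b) (hr₀ : 0 < r₀)
    (hf : ContinuousOn (fun p : ℝ × E => f p.1 p.2) (Ico 0 r₀ ×ˢ ball u₀ b))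
    (hlip : ∀ ρ < r₀, ∀ c < b, ∃ L : ℝ≥0, ∀ r ∈ Icc 0 ρ,
      LipschitzOnWith L (f r) (closedBall u₀ c)) :
    ∃ R c M L : ℝ≥0, 0 < R ∧ R < r₀ ∧ c < b ∧ IsRadialPicard f u₀ R c M L := by
  obtain ⟨c, hc, hcb⟩ : ∃ c : ℝ≥0, 0 < c ∧ c < b := by
    lift b to ℝ≥0 using hb.le
    exact mod_cast exists_between hb
  obtain ⟨ρ, hρ, hρr⟩ : ∃ ρ : ℝ≥0, 0 < ρ ∧ ρ < r₀ := by
    lift r₀ to ℝ≥0 using hr₀.le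
    exact mod_cast exists_between hr₀
  obtain ⟨L, hL⟩ := hlip ρ hρr c hcb
  have hsub : Icc (0 : ℝ) ρ ×ˢ closedBall u₀ c ⊆ Ico 0 r₀ ×ˢ ball u₀ b :=
    prod_mono (Icc_subset_Ico_right hρr) (closedBall_subset_ball hcb)
  have hfu₀ : ContinuousOn (f · u₀) (Icc (0 : ℝ) ρ) :=
    hf.comp (continuousOn_id.prodMk continuousOn_const) fun r hr =>
      hsub ⟨hr, mem_closedBall_self c.coe_nonneg⟩
  obtain ⟨M, hM⟩ := exists_norm_le_of_lipschitzOnWith isCompact_Icc hfu₀ hL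
  have small : ∀ {A a : ℝ≥0}, 0 < a → ∀ᶠ R in 𝓝[>] (0 : ℝ≥0), A * R ^ 2 < a := fun {A a} ha =>
    (((by fun_prop : Continuous fun R : ℝ≥0 => A * R ^ 2).tendsto' 0 0 (by simp)).mono_left
      nhdsWithin_le_nhds).eventually_lt_const ha
  obtain ⟨R, ⟨hMR, hLR⟩, hR, hRρ⟩ :=
    (((small (A := M) hc).and (small (A := L) one_pos)).and (Ioo_mem_nhdsGT hρ)).exists
  have hIcc : Icc (0 : ℝ) R ⊆ Icc 0 ρ := Icc_subset_Icc_right (mod_cast hRρ.le)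
  exact ⟨R, c, M, L, hR, lt_trans (mod_cast hRρ) hρr, hcb,
    ⟨hf.mono ((prod_mono_left hIcc).trans hsub), fun r hr => hM r (hIcc hr),
      fun r hr => hL r (hIcc hr), hMR.le, hLR⟩⟩

/-- The source term `r ↦ f(r, u(r))` of a curve `u` on `[0, R]`, extended to `ℝ` by its values at
the end points so that it has a radial potential on all of `ℝ`. -/
noncomputable def radialSource (f : ℝ → E → E) (u : C(Icc (0 : ℝ) R, closedBall u₀ (c : ℝ))) :
    ℝ → E :=
  IccExtend R.coe_nonneg fun r => f r (u r)

namespace IsRadialPicard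

lemma continuous_radialSource (hf : IsRadialPicard f u₀ R c M L)
    (u : C(Icc (0 : ℝ) R, closedBall u₀ (c : ℝ))) : Continuous (radialSource f u) :=
  Continuous.Icc_extend' <| hf.continuousOn.comp_continuous
    (f := fun r : Icc (0 : ℝ) R => ((r : ℝ), (u r : E))) (by fun_prop) fun r => ⟨r.2, (u r).2⟩

lemma norm_radialSource_le (hf : IsRadialPicard f u₀ R c M L)
    (u : C(Icc (0 : ℝ) R, closedBall u₀ (c : ℝ))) (t : ℝ) : ‖radialSource f u t‖ ≤ M :=
  hf.norm_le _ (projIcc _ _ _ t).2 _ (u _).2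

lemma dist_radialSource_le (hf : IsRadialPicard f u₀ R c M L)
    (u w : C(Icc (0 : ℝ) R, closedBall u₀ (c : ℝ))) (t : ℝ) :
    dist (radialSource f u t) (radialSource f w t) ≤ L * dist u w :=
  ((hf.lipschitzOnWith _ (projIcc _ _ _ t).2).dist_le_mul _ (u _).2 _ (w _).2).trans <|
    mul_le_mul_of_nonneg_left (ContinuousMap.dist_apply_le_dist (f := u) (g := w) _) L.coe_nonneg

variable [NormedSpace ℝ E]

lemma sub_radialPotential_mem (hf : IsRadialPicard f u₀ R c M L) (m : ℕ)
    (u : C(Icc (0 : ℝ) R, closedBall u₀ (c : ℝ))) {r : ℝ} (hr : r ∈ Icc (0 : ℝ) R) :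
    u₀ - radialPotential m (radialSource f u) r ∈ closedBall u₀ c := by
  rw [mem_closedBall, dist_eq_norm, sub_sub_cancel_left, norm_neg]
  calc ‖radialPotential m (radialSource f u) r‖ ≤ M * r ^ 2 :=
        norm_radialPotential_le hr.1 fun t _ => hf.norm_radialSource_le u t
    _ ≤ M * R ^ 2 := by
        gcongr
        exacts [hr.1, hr.2]
    _ ≤ c := mod_cast hf.mul_sq_le

variable [CompleteSpace E]

/-- The Picard operator `u ↦ u₀ - radialPotential m (f(·, u))`, whose fixed points are the
solutions of the integral equation for the singular Cauchy problem. -/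
noncomputable def picard (hf : IsRadialPicard f u₀ R c M L) (m : ℕ)
    (u : C(Icc (0 : ℝ) R, closedBall u₀ (c : ℝ))) : C(Icc (0 : ℝ) R, closedBall u₀ (c : ℝ)) where
  toFun r := ⟨u₀ - radialPotential m (radialSource f u) r, hf.sub_radialPotential_mem m u r.2⟩
  continuous_toFun := by
    have := continuous_radialPotential (m := m) (hf.continuous_radialSource u)
    fun_prop

lemma contractingWith_picard (hf : IsRadialPicard f u₀ R c M L) (m : ℕ) :
    ContractingWith (L * R ^ 2) (hf.picard m) := by
  refine ⟨hf.mul_sq_lt_one, LipschitzWith.of_dist_le_mul fun u w => ?_⟩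
  refine (ContinuousMap.dist_le (by positivity)).2 fun r => ?_
  have hsource : ∀ t ∈ Icc 0 (r : ℝ), ‖(radialSource f w - radialSource f u) t‖ ≤ L * dist u w := by
    intro t _
    rw [Pi.sub_apply, ← dist_eq_norm, dist_comm]
    exact hf.dist_radialSource_le u w t
  calc dist (hf.picard m u r) (hf.picard m w r)
      = ‖radialPotential m (radialSource f w - radialSource f u) r‖ := by
        rw [radialPotential_sub (hf.continuous_radialSource w) (hf.continuous_radialSource u),
          Subtype.dist_eq, dist_eq_norm]
        exact congrArg norm (sub_sub_sub_cancel_left _ _ _)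
    _ ≤ L * dist u w * r ^ 2 := norm_radialPotential_le r.2.1 hsource
    _ ≤ L * dist u w * R ^ 2 := by
        gcongr
        exacts [r.2.1, r.2.2]
    _ = (L * R ^ 2 : ℝ≥0) * dist u w := by
        push_cast
        ring

lemma exists_eq_sub_radialPotential (hf : IsRadialPicard f u₀ R c M L) (m : ℕ) :
    ∃ g : ℝ → E, Continuous g ∧ ∀ r ∈ Icc (0 : ℝ) R,
      u₀ - radialPotential m g r ∈ closedBall u₀ c ∧ g r = f r (u₀ - radialPotential m g r) := by
  have : Nonempty C(Icc (0 : ℝ) R, closedBall u₀ (c : ℝ)) :=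
    ⟨.const _ ⟨u₀, mem_closedBall_self c.coe_nonneg⟩⟩
  have : CompleteSpace (closedBall u₀ (c : ℝ)) := isClosed_closedBall.completeSpace_coe
  obtain ⟨u, hu⟩ : ∃ u, hf.picard m u = u := ⟨_, (hf.contractingWith_picard m).fixedPoint_isFixedPt⟩
  refine ⟨radialSource f u, hf.continuous_radialSource u, fun r hr =>
    ⟨hf.sub_radialPotential_mem m u hr, ?_⟩⟩
  have hur : (u ⟨r, hr⟩ : E) = u₀ - radialPotential m (radialSource f u) r :=
    congrArg (fun w => (w ⟨r, hr⟩ : E)) hu.symm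
  rw [← hur]
  exact IccExtend_of_mem _ _ hr

lemma exists_isRadialSolution (hf : IsRadialPicard f u₀ R c M L) (m : ℕ) {b : ℝ} (hcb : c < b) :
    ∃ u : ℝ → E, IsRadialSolution m f u₀ b R u := by
  obtain ⟨g, hg, hfix⟩ := hf.exists_eq_sub_radialPotential m
  exact ⟨_, isRadialSolution_sub_radialPotential hg
    (fun r hr => closedBall_subset_ball hcb (hfix r (Ico_subset_Icc_self hr)).1)
    fun r hr => (hfix r (Ico_subset_Icc_self hr)).2⟩

end IsRadialPicard

end Existence

lemma exists_lipschitzOnWith_of_continuousOn_hasFDerivWithinAt {X E F : Type*}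
    [TopologicalSpace X] [NormedAddCommGroup E] [NormedSpace ℝ E] [NormedAddCommGroup F]
    [NormedSpace ℝ F] {K : Set X} {s : Set E} (hK : IsCompact K) (hs : IsCompact s)
    (hconv : Convex ℝ s) {f : X → E → F} {f' : X → E → E →L[ℝ] F}
    (hf : ∀ r ∈ K, ∀ x ∈ s, HasFDerivWithinAt (f r) (f' r x) s x)
    (hf' : ContinuousOn (fun p : X × E => f' p.1 p.2) (K ×ˢ s)) :
    ∃ L : ℝ≥0, ∀ r ∈ K, LipschitzOnWith L (f r) s := by
  obtain ⟨L, hL⟩ := (hK.prod hs).exists_bound_of_continuousOn hf'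
  exact ⟨L.toNNReal, fun r hr => hconv.lipschitzOnWith_of_nnnorm_hasFDerivWithin_le (hf r hr)
    fun x hx => NNReal.le_toNNReal_of_coe_le (hL (r, x) ⟨hr, hx⟩)⟩

theorem stmt0_general {E : Type*} [NormedAddCommGroup E] [NormedSpace ℝ E] [CompleteSpace E]
    (m : ℕ) {f : ℝ → E → E} {u₀ : E} {b r₀ : ℝ} (hb : 0 < b) (hr₀ : 0 < r₀)
    (hf : ContinuousOn (fun p : ℝ × E => f p.1 p.2) (Ico 0 r₀ ×ˢ ball u₀ b))
    (hlip : ∀ ρ < r₀, ∀ c < b, ∃ L : ℝ≥0, ∀ r ∈ Icc 0 ρ,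
      LipschitzOnWith L (f r) (closedBall u₀ c)) :
    ∃ r₁ : ℝ, 0 < r₁ ∧ r₁ ≤ r₀ ∧ ∃ u : ℝ → E, IsRadialSolution m f u₀ b r₁ u ∧
      ∀ w : ℝ → E, IsRadialSolution m f u₀ b r₁ w → EqOn u w (Ico 0 r₁) := by
  obtain ⟨R, c, M, L, hR, hRr₀, hcb, hpicard⟩ := exists_isRadialPicard hb hr₀ hf hlip
  obtain ⟨u, hu⟩ := hpicard.exists_isRadialSolution m hcb
  exact ⟨R, hR, hRr₀.le, u, hu, fun w hw => hu.eqOn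
    (hf.mono (prod_mono_left (Ico_subset_Ico_right hRr₀.le)))
    (fun ρ hρ => hlip ρ (hρ.trans hRr₀)) hw⟩

/-- Local existence and uniqueness for the singular Cauchy problem
`(r^{d-1}u')' + r^{d-1} f(r,u) = 0`, `u(0) = u₀`, `u'(0) = 0`. -/
theorem stmt0 (d n : ℕ) (hd : 2 ≤ d) (hn : 1 ≤ n)
    (u₀ : EuclideanSpace ℝ (Fin n)) (b r₀ : ℝ) (hb : 0 < b) (hr₀ : 0 < r₀)
    (f : ℝ → EuclideanSpace ℝ (Fin n) → EuclideanSpace ℝ (Fin n))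
    (Df : ℝ → EuclideanSpace ℝ (Fin n) →
      (EuclideanSpace ℝ (Fin n) →L[ℝ] EuclideanSpace ℝ (Fin n)))
    (hfC : ContinuousOn (fun p : ℝ × EuclideanSpace ℝ (Fin n) => f p.1 p.2)
      (Ico 0 r₀ ×ˢ ball u₀ b))
    (hDf : ∀ r ∈ Ico (0:ℝ) r₀, ∀ w ∈ ball u₀ b, HasFDerivAt (f r) (Df r w) w)
    (hDfC : ContinuousOn (fun p : ℝ × EuclideanSpace ℝ (Fin n) => Df p.1 p.2)
      (Ico 0 r₀ ×ˢ ball u₀ b)) :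
    ∃ r₁ : ℝ, 0 < r₁ ∧ r₁ ≤ r₀ ∧ ∃ u : ℝ → EuclideanSpace ℝ (Fin n),
      IsC2Sol d n f u₀ b r₁ u ∧
      ∀ w : ℝ → EuclideanSpace ℝ (Fin n), IsC2Sol d n f u₀ b r₁ w → EqOn u w (Ico 0 r₁) := by
  obtain ⟨m, rfl⟩ : ∃ m, d = m + 1 := ⟨d - 1, by omega⟩
  have hlip : ∀ ρ < r₀, ∀ c < b, ∃ L : ℝ≥0, ∀ r ∈ Icc 0 ρ,
      LipschitzOnWith L (f r) (closedBall u₀ c) := fun ρ hρ c hc =>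
    exists_lipschitzOnWith_of_continuousOn_hasFDerivWithinAt isCompact_Icc
      (isCompact_closedBall u₀ c) (convex_closedBall u₀ c)
      (fun r hr x hx => (hDf r (Icc_subset_Ico_right hρ hr) x
        (closedBall_subset_ball hc hx)).hasFDerivWithinAt)
      (hDfC.mono (prod_mono (Icc_subset_Ico_right hρ) (closedBall_subset_ball hc)))
  simpa only [isC2Sol_succ_iff] using stmt0_general m hb hr₀ hfC hlip
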